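/- arXiv:math/0212105 — 2 statements merged into one kernel-verified Lean document; each statement's English description precedes it below -/
import Mathlib

section
/- Let f : ℝ → ℂ be locally integrable such that F(x) = ∫_0^x f has finite limits as x → ∞ and as x → −∞, and let g : ℝ → ℝ be Lebesgue integrable on ℝ and of bounded variation on ℝ. Then for every x ∈ ℝ the improper convolution f∗g(x) = lim_{T₁,T₂→∞} ∫_{-T₁}^{T₂} f(x−t) g(t) dt exists, and for all real numbers a ≤ b, |∫_a^b (f∗g)(x) dx| ≤ ‖f‖_A · ‖g‖₁, where ‖f‖_A = sup_{c ≤ d} |∫_c^d f| and ‖g‖₁ = ∫_{-∞}^{∞} |g|. -/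
open MeasureTheory Filter

/-!
Slicing an antitone weight `φ ≥ 0` on `[a, b]` by its superlevel sets, which are intervals starting
at `a`, gives Bonnet's bound `‖∫_a^b φ h‖ ≤ φ(a) · sup_c ‖∫_a^c h‖`, and the Jordan decomposition
turns it into `‖∫_a^b g h‖ ≤ (|g(b)| + V_{[a,b]} g) · sup_c ‖∫_a^c h‖`. An integrable function of
bounded variation tends to `0` at `±∞`, and its variation over `[c, d]` tends to `0` as `c` and `d`
escape to `±∞` together; so, applied to `h(t) = f(x - t)`, the bound is a Cauchy criterion for the
improper convolution, as well as a bound on the truncated convolutions that is uniform in the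
truncation and in `x`. For the truncated convolutions Fubini's theorem gives
`‖∫_a^b ∫_{-T}^T g(t) f(x - t) dt dx‖ ≤ ‖f‖_A ‖g‖₁`, and dominated convergence on `[a, b]` passes
to the limit.
-/

section

open Set Topology

variable {E : Type*} [NormedAddCommGroup E]

theorem intervalIntegrable_comp_sub_left {f : ℝ → E}
    (hf : ∀ a b, IntervalIntegrable f volume a b) (x a b : ℝ) :
    IntervalIntegrable (fun t ↦ f (x - t)) volume a b := by
  simpa only [sub_sub_cancel] using (hf (x - a) (x - b)).comp_sub_left x

variable [NormedSpace ℝ E]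

theorem integral_smul_eq_setIntegral_setIntegral_lt [CompleteSpace E] {X : Type*}
    [MeasurableSpace X] {μ : Measure X} [SFinite μ] {φ : X → ℝ} {h : X → E} {K : ℝ}
    (hφ : AEMeasurable φ μ) (hφK : ∀ᵐ x ∂μ, φ x ∈ Icc 0 K) (hh : Integrable h μ) :
    ∫ x, φ x • h x ∂μ = ∫ s in Ico 0 K, ∫ x in {x | s < φ x}, h x ∂μ := by
  set k : X → ℝ → E := fun x s ↦ (Iio (φ x)).indicator (fun _ ↦ h x) s with hk
  have hk_int : Integrable (Function.uncurry k) (μ.prod (volume.restrict (Ico 0 K))) :=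
    (hh.comp_fst _).indicator₀ (nullMeasurableSet_lt measurable_snd.aemeasurable hφ.comp_fst)
  calc ∫ x, φ x • h x ∂μ
      = ∫ x, (∫ s in Ico 0 K, k x s) ∂μ := by
        refine integral_congr_ae (hφK.mono fun x hx ↦ ?_)
        simp only [hk, setIntegral_indicator measurableSet_Iio, Ico_inter_Iio, min_eq_right hx.2,
          setIntegral_const, Real.volume_real_Ico_of_le hx.1, sub_zero]
    _ = ∫ s in Ico 0 K, ∫ x, k x s ∂μ := integral_integral_swap hk_int
    _ = ∫ s in Ico 0 K, ∫ x in {x | s < φ x}, h x ∂μ := by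
        congr 1 with s
        exact integral_indicator₀ (nullMeasurableSet_lt aemeasurable_const hφ)

theorem exists_ae_eq_Ioc_of_forall_Ioc_subset {a b : ℝ} {S : Set ℝ} (hab : a ≤ b)
    (hSb : S ⊆ Ioc a b) (hS : ∀ t ∈ S, Ioc a t ⊆ S) :
    ∃ c ∈ Icc a b, S =ᵐ[volume] Ioc a c := by
  obtain rfl | hne := S.eq_empty_or_nonempty
  · exact ⟨a, left_mem_Icc.2 hab, by rw [Ioc_self]; rfl⟩
  have hbdd : BddAbove S := ⟨b, fun t ht ↦ (hSb ht).2⟩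
  have hSc : S ⊆ Ioc a (sSup S) := fun t ht ↦ ⟨(hSb ht).1, le_csSup hbdd ht⟩
  have hcS : Ioo a (sSup S) ⊆ S := fun t ht ↦ by
    obtain ⟨u, hu, htu⟩ := exists_lt_of_lt_csSup hne ht.2
    exact hS u hu ⟨ht.1, htu.le⟩
  obtain ⟨t, ht⟩ := hne
  exact ⟨sSup S, ⟨(hSc ht).1.le.trans (hSc ht).2, csSup_le ⟨t, ht⟩ fun u hu ↦ (hSb hu).2⟩,
    hSc.eventuallyLE.antisymm (Ioo_ae_eq_Ioc.symm.le.trans hcS.eventuallyLE)⟩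

theorem norm_integral_smul_le_of_antitoneOn [CompleteSpace E] {φ : ℝ → ℝ} {h : ℝ → E}
    {a b M : ℝ} (hab : a ≤ b) (hφ : AntitoneOn φ (Icc a b)) (hφb : 0 ≤ φ b)
    (hh : IntervalIntegrable h volume a b) (hM : ∀ c ∈ Icc a b, ‖∫ t in a..c, h t‖ ≤ M) :
    ‖∫ t in a..b, φ t • h t‖ ≤ φ a * M := by
  have hφ_meas : AEMeasurable φ (volume.restrict (Ioc a b)) :=
    aemeasurable_restrict_of_antitoneOn measurableSet_Ioc (hφ.mono Ioc_subset_Icc_self)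
  have hφ_mem : ∀ᵐ t ∂volume.restrict (Ioc a b), φ t ∈ Icc 0 (φ a) :=
    ae_restrict_of_forall_mem measurableSet_Ioc fun t ht ↦
      have ht' := Ioc_subset_Icc_self ht
      ⟨hφb.trans (hφ ht' (right_mem_Icc.2 hab) ht.2), hφ (left_mem_Icc.2 hab) ht' ht.1.le⟩
  have hlevel (s : ℝ) : ‖∫ t in {t | s < φ t}, h t ∂volume.restrict (Ioc a b)‖ ≤ M := by
    obtain ⟨c, hc, hSc⟩ := exists_ae_eq_Ioc_of_forall_Ioc_subset hab
      (inter_subset_right (s := {t | s < φ t})) fun t ht u hu ↦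
        have hub : u ∈ Ioc a b := ⟨hu.1, hu.2.trans ht.2.2⟩
        ⟨ht.1.trans_le (hφ (Ioc_subset_Icc_self hub) (Ioc_subset_Icc_self ht.2) hu.2), hub⟩
    rw [Measure.restrict_restrict₀ (nullMeasurableSet_lt aemeasurable_const hφ_meas),
      setIntegral_congr_set hSc, ← intervalIntegral.integral_of_le hc.1]
    exact hM c hc
  have hφa : 0 ≤ φ a := hφb.trans (hφ (left_mem_Icc.2 hab) (right_mem_Icc.2 hab) hab)
  calc ‖∫ t in a..b, φ t • h t‖
      = ‖∫ s in Ico 0 (φ a), ∫ t in {t | s < φ t}, h t ∂volume.restrict (Ioc a b)‖ := by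
        rw [intervalIntegral.integral_of_le hab, integral_smul_eq_setIntegral_setIntegral_lt
          hφ_meas hφ_mem ((intervalIntegrable_iff_integrableOn_Ioc_of_le hab).1 hh)]
    _ ≤ M * volume.real (Ico 0 (φ a)) :=
        norm_setIntegral_le_of_norm_le_const measure_Ico_lt_top fun s _ ↦ hlevel s
    _ = φ a * M := by rw [Real.volume_real_Ico_of_le hφa, sub_zero, mul_comm]

theorem exists_antitoneOn_sub_of_boundedVariationOn {g : ℝ → ℝ} {a b : ℝ} (hab : a ≤ b)
    (hg : BoundedVariationOn g (Icc a b)) :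
    ∃ φ ψ : ℝ → ℝ, AntitoneOn φ (Icc a b) ∧ AntitoneOn ψ (Icc a b) ∧ φ b = 0 ∧ ψ b = 0 ∧
      φ a + ψ a = (eVariationOn g (Icc a b)).toReal ∧ ∀ t, g t = g b + φ t - ψ t := by
  have hb : b ∈ Icc a b := right_mem_Icc.2 hab
  set v := variationOnFromTo g (Icc a b) b with hv
  have hvb : v b = 0 := variationOnFromTo.self g _ b
  have hva : v a = -(eVariationOn g (Icc a b)).toReal := by
    rw [hv, variationOnFromTo.eq_of_ge g _ hab, inter_self]
  have hsub := variationOnFromTo.sub_self_monotoneOn hg.locallyBoundedVariationOn hb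
  have hadd := variationOnFromTo.add_self_monotoneOn hg.locallyBoundedVariationOn hb
  refine ⟨fun t ↦ (g t - g b - v t) / 2, fun t ↦ (g b - g t - v t) / 2, fun s hs t ht hst ↦ ?_,
    fun s hs t ht hst ↦ ?_, by simp [hvb], by simp [hvb], by linarith, fun t ↦ by ring⟩
  · have := hsub hs ht hst
    simp only [Pi.sub_apply] at this
    linarith
  · have := hadd hs ht hst
    simp only [Pi.add_apply] at this
    linarith

theorem intervalIntegrable_smul_of_antitoneOn {φ : ℝ → ℝ} {h : ℝ → E} {a b : ℝ} (hab : a ≤ b)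
    (hφ : AntitoneOn φ (Icc a b)) (hh : IntervalIntegrable h volume a b) :
    IntervalIntegrable (fun t ↦ φ t • h t) volume a b := by
  rw [intervalIntegrable_iff_integrableOn_Icc_of_le hab] at hh ⊢
  exact Integrable.smul_of_top_right hh
    (hφ.memLp_top (isLeast_Icc hab) (isGreatest_Icc hab) measurableSet_Icc)

theorem intervalIntegrable_smul_of_boundedVariationOn {g : ℝ → ℝ} {h : ℝ → E} {a b : ℝ}
    (hg : BoundedVariationOn g (uIcc a b)) (hh : IntervalIntegrable h volume a b) :
    IntervalIntegrable (fun t ↦ g t • h t) volume a b := by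
  wlog hab : a ≤ b generalizing a b
  · exact (this (uIcc_comm a b ▸ hg) hh.symm (le_of_not_ge hab)).symm
  rw [uIcc_of_le hab] at hg
  obtain ⟨φ, ψ, hφ, hψ, -, -, -, hgφψ⟩ := exists_antitoneOn_sub_of_boundedVariationOn hab hg
  refine (((hh.smul (g b)).add (intervalIntegrable_smul_of_antitoneOn hab hφ hh)).sub
    (intervalIntegrable_smul_of_antitoneOn hab hψ hh)).congr fun t _ ↦ ?_
  simp only [Pi.smul_apply]
  rw [hgφψ t, sub_smul, add_smul]

theorem norm_integral_smul_le_of_boundedVariationOn [CompleteSpace E] {g : ℝ → ℝ} {h : ℝ → E}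
    {a b M : ℝ} (hab : a ≤ b) (hg : BoundedVariationOn g (Icc a b))
    (hh : IntervalIntegrable h volume a b) (hM : ∀ c ∈ Icc a b, ‖∫ t in a..c, h t‖ ≤ M) :
    ‖∫ t in a..b, g t • h t‖ ≤ (|g b| + (eVariationOn g (Icc a b)).toReal) * M := by
  obtain ⟨φ, ψ, hφ, hψ, hφb, hψb, hV, hgφψ⟩ := exists_antitoneOn_sub_of_boundedVariationOn hab hg
  have hgh : IntervalIntegrable (fun t ↦ g b • h t) volume a b := hh.smul (g b)
  have hφh := intervalIntegrable_smul_of_antitoneOn hab hφ hh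
  have hψh := intervalIntegrable_smul_of_antitoneOn hab hψ hh
  calc ‖∫ t in a..b, g t • h t‖
      = ‖∫ t in a..b, (g b • h t + φ t • h t - ψ t • h t)‖ := by
        simp_rw [← add_smul, ← sub_smul, ← hgφψ]
    _ = ‖g b • (∫ t in a..b, h t) + (∫ t in a..b, φ t • h t) - ∫ t in a..b, ψ t • h t‖ := by
        rw [intervalIntegral.integral_sub (hgh.add hφh) hψh,
          intervalIntegral.integral_add hgh hφh, intervalIntegral.integral_smul]
    _ ≤ |g b| * M + φ a * M + ψ a * M := by
        refine (norm_sub_le _ _).trans (add_le_add ((norm_add_le _ _).trans (add_le_add ?_ ?_)) ?_)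
        · rw [norm_smul, Real.norm_eq_abs]
          gcongr
          exact hM b (right_mem_Icc.2 hab)
        · exact norm_integral_smul_le_of_antitoneOn hab hφ hφb.ge hh hM
        · exact norm_integral_smul_le_of_antitoneOn hab hψ hψb.ge hh hM
    _ = (|g b| + (eVariationOn g (Icc a b)).toReal) * M := by rw [← hV]; ring

section BoundedVariation

variable {g : ℝ → ℝ} {h : ℝ → E} {M : ℝ}

theorem norm_integral_smul_le_variationOnFromTo [CompleteSpace E]
    (hg : LocallyBoundedVariationOn g univ) (hh : ∀ a b, IntervalIntegrable h volume a b)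
    (hM : ∀ a b, ‖∫ t in a..b, h t‖ ≤ M) (a b : ℝ) :
    ‖∫ t in a..b, g t • h t‖ ≤ (|g a| + |g b| + |variationOnFromTo g univ a b|) * M := by
  wlog hab : a ≤ b generalizing a b
  · rw [intervalIntegral.integral_symm, norm_neg, variationOnFromTo.eq_neg_swap, abs_neg,
      add_comm |g a|]
    exact this b a (le_of_not_ge hab)
  have hM0 : 0 ≤ M := (norm_nonneg _).trans (hM a b)
  have hgab : BoundedVariationOn g (Icc a b) := by
    simpa only [univ_inter] using hg a b (mem_univ a) (mem_univ b)
  rw [variationOnFromTo.eq_of_le g _ hab, univ_inter, abs_of_nonneg ENNReal.toReal_nonneg]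
  refine (norm_integral_smul_le_of_boundedVariationOn hab hgab (hh a b) fun c _ ↦ hM a c).trans ?_
  gcongr
  exact le_add_of_nonneg_left (abs_nonneg _)

theorem norm_integral_smul_le_eVariationOn [CompleteSpace E] (hg : BoundedVariationOn g univ)
    (hh : ∀ a b, IntervalIntegrable h volume a b) (hM : ∀ a b, ‖∫ t in a..b, h t‖ ≤ M) (a b : ℝ) :
    ‖∫ t in a..b, g t • h t‖ ≤ (2 * |g 0| + 3 * (eVariationOn g univ).toReal) * M := by
  have hM0 : 0 ≤ M := (norm_nonneg _).trans (hM a b)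
  have hg_le (t : ℝ) : |g t| ≤ |g 0| + (eVariationOn g univ).toReal := by
    have hdist := hg.dist_le (mem_univ t) (mem_univ 0)
    rw [Real.dist_eq] at hdist
    linarith [abs_sub_abs_le_abs_sub (g t) (g 0)]
  refine (norm_integral_smul_le_variationOnFromTo hg.locallyBoundedVariationOn hh hM a b).trans
    (mul_le_mul_of_nonneg_right ?_ hM0)
  linarith [hg_le a, hg_le b, variationOnFromTo.abs_le_eVariationOn hg (a := a) (b := b)]

theorem exists_tendsto_integral_smul_of_tendsto_zero [CompleteSpace E] {l : Filter ℝ} [l.NeBot]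
    (hg : LocallyBoundedVariationOn g univ) (hgl : Tendsto g l (𝓝 0))
    (hvl : ∃ V, Tendsto (variationOnFromTo g univ 0) l (𝓝 V))
    (hh : ∀ a b, IntervalIntegrable h volume a b) (hM : ∀ a b, ‖∫ t in a..b, h t‖ ≤ M) :
    ∃ y, Tendsto (fun x ↦ ∫ t in 0..x, g t • h t) l (𝓝 y) := by
  obtain ⟨V, hV⟩ := hvl
  have hgh (a b : ℝ) : IntervalIntegrable (fun t ↦ g t • h t) volume a b :=
    intervalIntegrable_smul_of_boundedVariationOn
      (univ_inter (uIcc a b) ▸ hg (a ⊓ b) (a ⊔ b) (mem_univ _) (mem_univ _)) (hh a b)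
  rw [← cauchy_map_iff_exists_tendsto, cauchy_map_iff', tendsto_uniformity_iff_dist_tendsto_zero]
  have hbound : Tendsto (fun p : ℝ × ℝ ↦ (|g p.2| + |g p.1| +
      |variationOnFromTo g univ 0 p.1 - variationOnFromTo g univ 0 p.2|) * M) (l ×ˢ l) (𝓝 0) := by
    simpa using (((hgl.comp tendsto_snd).abs.add (hgl.comp tendsto_fst).abs).add
      ((hV.comp tendsto_fst).sub (hV.comp tendsto_snd)).abs).mul_const M
  refine squeeze_zero (fun _ ↦ dist_nonneg) (fun p ↦ ?_) hbound
  rw [dist_eq_norm, intervalIntegral.integral_interval_sub_left (hgh _ _) (hgh _ _),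
    variationOnFromTo.sub_right hg (mem_univ _) (mem_univ _) (mem_univ _)]
  exact norm_integral_smul_le_variationOnFromTo hg hh hM p.2 p.1

theorem boundedVariationOn_variationOnFromTo (hg : BoundedVariationOn g univ) (a : ℝ) :
    BoundedVariationOn (variationOnFromTo g univ a) univ :=
  (variationOnFromTo.monotoneOn hg.locallyBoundedVariationOn (mem_univ a)).boundedVariationOn
    fun _ _ ↦ variationOnFromTo.abs_le_eVariationOn hg

theorem exists_tendsto_atTop_of_boundedVariationOn (hg : BoundedVariationOn g univ) :
    ∃ c, Tendsto g atTop (𝓝 c) := by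
  simpa only [principal_univ, top_inf_eq] using hg.exists_tendsto_atTop

theorem exists_tendsto_atBot_of_boundedVariationOn (hg : BoundedVariationOn g univ) :
    ∃ c, Tendsto g atBot (𝓝 c) := by
  simpa only [principal_univ, top_inf_eq] using hg.exists_tendsto_atBot

theorem tendsto_zero_of_integrable {l : Filter ℝ} (hl : ∀ s ∈ l, volume s = ⊤)
    (hg1 : Integrable g) (hlim : ∃ c, Tendsto g l (𝓝 c)) : Tendsto g l (𝓝 0) := by
  obtain ⟨c, hc⟩ := hlim
  rwa [(hg1.integrableAtFilter l).eq_zero_of_tendsto hl hc] at hc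

theorem volume_eq_top_of_mem_atTop {s : Set ℝ} (hs : s ∈ atTop) : volume s = ⊤ := by
  obtain ⟨a, ha⟩ := mem_atTop_sets.1 hs
  exact measure_mono_top ha Real.volume_Ici

theorem volume_eq_top_of_mem_atBot {s : Set ℝ} (hs : s ∈ atBot) : volume s = ⊤ := by
  obtain ⟨a, ha⟩ := mem_atBot_sets.1 hs
  exact measure_mono_top ha Real.volume_Iic

end BoundedVariation

/-- The improper convolution `f ∗ g`, in which the integrals over `[-T₁, T₂]` need only converge
conditionally as `T₁` and `T₂` tend to infinity independently. Like every `limUnder`, it is a junk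
value where this limit does not exist. -/
noncomputable def improperConvolution (f : ℝ → E) (g : ℝ → ℝ) (x : ℝ) : E :=
  limUnder (atTop ×ˢ atTop) fun T : ℝ × ℝ ↦ ∫ t in -T.1..T.2, g t • f (x - t)

section Convolution

variable {f : ℝ → E} {g : ℝ → ℝ} {M : ℝ}

theorem norm_integral_comp_sub_left_le (hM : ∀ a b, ‖∫ t in a..b, f t‖ ≤ M) (x a b : ℝ) :
    ‖∫ t in a..b, f (x - t)‖ ≤ M := by
  rw [intervalIntegral.integral_comp_sub_left]
  exact hM _ _

theorem tendsto_improperConvolution [CompleteSpace E]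
    (hf : ∀ a b, IntervalIntegrable f volume a b) (hM : ∀ a b, ‖∫ t in a..b, f t‖ ≤ M)
    (hg1 : Integrable g) (hg : BoundedVariationOn g univ) (x : ℝ) :
    Tendsto (fun T : ℝ × ℝ ↦ ∫ t in -T.1..T.2, g t • f (x - t)) (atTop ×ˢ atTop)
      (𝓝 (improperConvolution f g x)) := by
  have hfx := intervalIntegrable_comp_sub_left hf x
  have hMx := norm_integral_comp_sub_left_le hM x
  have hv := boundedVariationOn_variationOnFromTo hg 0
  obtain ⟨y, hy⟩ := exists_tendsto_integral_smul_of_tendsto_zero hg.locallyBoundedVariationOn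
    (tendsto_zero_of_integrable (fun _ ↦ volume_eq_top_of_mem_atTop) hg1
      (exists_tendsto_atTop_of_boundedVariationOn hg))
    (exists_tendsto_atTop_of_boundedVariationOn hv) hfx hMx
  obtain ⟨z, hz⟩ := exists_tendsto_integral_smul_of_tendsto_zero hg.locallyBoundedVariationOn
    (tendsto_zero_of_integrable (fun _ ↦ volume_eq_top_of_mem_atBot) hg1
      (exists_tendsto_atBot_of_boundedVariationOn hg))
    (exists_tendsto_atBot_of_boundedVariationOn hv) hfx hMx
  have hgf (a b : ℝ) : IntervalIntegrable (fun t ↦ g t • f (x - t)) volume a b :=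
    intervalIntegrable_smul_of_boundedVariationOn (hg.mono (subset_univ _)) (hfx a b)
  refine tendsto_nhds_limUnder ⟨y - z, ((hy.comp tendsto_snd).sub
    (hz.comp (tendsto_neg_atTop_atBot.comp tendsto_fst))).congr fun T ↦ ?_⟩
  exact intervalIntegral.integral_interval_sub_left (hgf _ _) (hgf _ _)

theorem integrable_prod_smul_comp_sub (hf : ∀ a b, IntervalIntegrable f volume a b)
    (hg1 : Integrable g) (a b c d : ℝ) :
    Integrable (fun q : ℝ × ℝ ↦ g q.2 • f (q.1 - q.2))
      ((volume.restrict (Ioc a b)).prod (volume.restrict (Ioc c d))) := by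
  have hf_ind : Integrable ((Ioc (a - d) (b - c)).indicator f) :=
    (integrable_indicator_iff measurableSet_Ioc).2 (hf _ _).1
  rw [Measure.prod_restrict]
  refine (hg1.convolution_integrand (.lsmul ℝ ℝ) hf_ind).integrableOn.congr ?_
  filter_upwards [ae_restrict_mem (measurableSet_Ioc.prod measurableSet_Ioc)] with q hq
  have hmem : q.1 - q.2 ∈ Ioc (a - d) (b - c) := by
    obtain ⟨⟨_, _⟩, _, _⟩ := hq
    constructor <;> linarith
  rw [indicator_of_mem hmem]
  rfl

theorem norm_integral_integral_smul_comp_sub_le (hf : ∀ a b, IntervalIntegrable f volume a b)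
    (hM : ∀ a b, ‖∫ t in a..b, f t‖ ≤ M) (hg1 : Integrable g) {a b c d : ℝ} (hab : a ≤ b)
    (hcd : c ≤ d) :
    ‖∫ x in a..b, ∫ t in c..d, g t • f (x - t)‖ ≤ M * ∫ t, |g t| := by
  have hM0 : 0 ≤ M := (norm_nonneg _).trans (hM a b)
  have hMg : Integrable (fun t ↦ M * |g t|) := hg1.abs.const_mul M
  have hslice (t : ℝ) : ‖∫ x in a..b, g t • f (x - t)‖ ≤ M * |g t| := by
    rw [intervalIntegral.integral_smul, intervalIntegral.integral_comp_sub_right, norm_smul,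
      Real.norm_eq_abs, mul_comm]
    gcongr
    exact hM _ _
  calc ‖∫ x in a..b, ∫ t in c..d, g t • f (x - t)‖
      = ‖∫ t in Ioc c d, ∫ x in a..b, g t • f (x - t)‖ := by
        simp only [intervalIntegral.integral_of_le hab, intervalIntegral.integral_of_le hcd]
        rw [integral_integral_swap (integrable_prod_smul_comp_sub hf hg1 a b c d)]
    _ ≤ ∫ t in Ioc c d, M * |g t| :=
        norm_integral_le_of_norm_le hMg.integrableOn (Eventually.of_forall hslice)
    _ ≤ ∫ t, M * |g t| := setIntegral_le_integral hMg (Eventually.of_forall fun t ↦ by positivity)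
    _ = M * ∫ t, |g t| := integral_const_mul M _

theorem tendsto_integral_improperConvolution [CompleteSpace E]
    (hf : ∀ a b, IntervalIntegrable f volume a b) (hM : ∀ a b, ‖∫ t in a..b, f t‖ ≤ M)
    (hg1 : Integrable g) (hg : BoundedVariationOn g univ) {a b : ℝ} (hab : a ≤ b) :
    Tendsto (fun T ↦ ∫ x in a..b, ∫ t in -T..T, g t • f (x - t)) atTop
      (𝓝 (∫ x in a..b, improperConvolution f g x)) := by
  refine intervalIntegral.tendsto_integral_filter_of_dominated_convergence
    (fun _ ↦ (2 * |g 0| + 3 * (eVariationOn g univ).toReal) * M) ?_ ?_ intervalIntegrable_const ?_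
  · filter_upwards [eventually_ge_atTop 0] with T hT
    simp_rw [uIoc_of_le hab, intervalIntegral.integral_of_le (neg_le_self hT)]
    exact (integrable_prod_smul_comp_sub hf hg1 a b (-T) T).integral_prod_left.aestronglyMeasurable
  · exact Eventually.of_forall fun T ↦ Eventually.of_forall fun x _ ↦
      norm_integral_smul_le_eVariationOn hg (intervalIntegrable_comp_sub_left hf x)
        (norm_integral_comp_sub_left_le hM x) (-T) T
  · exact Eventually.of_forall fun x _ ↦
      (tendsto_improperConvolution hf hM hg1 hg x).comp (tendsto_id.prodMk tendsto_id)

theorem norm_integral_improperConvolution_le [CompleteSpace E]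
    (hf : ∀ a b, IntervalIntegrable f volume a b) (hM : ∀ a b, ‖∫ t in a..b, f t‖ ≤ M)
    (hg1 : Integrable g) (hg : BoundedVariationOn g univ) {a b : ℝ} (hab : a ≤ b) :
    ‖∫ x in a..b, improperConvolution f g x‖ ≤ M * ∫ t, |g t| := by
  refine le_of_tendsto (tendsto_integral_improperConvolution hf hM hg1 hg hab).norm ?_
  filter_upwards [eventually_ge_atTop 0] with T hT
  exact norm_integral_integral_smul_comp_sub_le hf hM hg1 hab (neg_le_self hT)

end Convolution

/-- The Alexiewicz norm `‖f‖_A`, under which `f` is measured by the oscillation of its primitive.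
As a real supremum it is `0` when the integrals of `f` over compact intervals are unbounded. -/
noncomputable def alexiewiczNorm (f : ℝ → E) : ℝ :=
  sSup {r : ℝ | ∃ c d : ℝ, c ≤ d ∧ r = ‖∫ t in c..d, f t‖}

theorem norm_integral_le_alexiewiczNorm {f : ℝ → E} (hf : ∀ a b, IntervalIntegrable f volume a b)
    (hF : Bornology.IsBounded (range fun x ↦ ∫ t in 0..x, f t)) (a b : ℝ) :
    ‖∫ t in a..b, f t‖ ≤ alexiewiczNorm f := by
  wlog hab : a ≤ b generalizing a b
  · rw [intervalIntegral.integral_symm, norm_neg]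
    exact this b a (le_of_not_ge hab)
  obtain ⟨B, hB⟩ := isBounded_iff_forall_norm_le.1 hF
  refine le_csSup ⟨B + B, ?_⟩ ⟨a, b, hab, rfl⟩
  rintro _ ⟨c, d, -, rfl⟩
  rw [← intervalIntegral.integral_interval_sub_left (hf 0 d) (hf 0 c)]
  exact (norm_sub_le _ _).trans
    (add_le_add (hB _ (mem_range_self d)) (hB _ (mem_range_self c)))

theorem stmt14_general [CompleteSpace E] (f : ℝ → E) (g : ℝ → ℝ)
    (hf : ∀ a b, IntervalIntegrable f volume a b)
    (hF : Bornology.IsBounded (range fun x ↦ ∫ t in 0..x, f t))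
    (hg1 : Integrable g) (hgbv : BoundedVariationOn g univ) :
    ∃ fg : ℝ → E,
      (∀ x, Tendsto (fun T : ℝ × ℝ ↦ ∫ t in -T.1..T.2, g t • f (x - t)) (atTop ×ˢ atTop)
        (𝓝 (fg x))) ∧
      ∀ a b, a ≤ b → ‖∫ x in a..b, fg x‖ ≤ alexiewiczNorm f * ∫ t, |g t| :=
  have hM := norm_integral_le_alexiewiczNorm hf hF
  ⟨improperConvolution f g, tendsto_improperConvolution hf hM hg1 hgbv,
    fun _ _ ↦ norm_integral_improperConvolution_le hf hM hg1 hgbv⟩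

end

/-- Proposition 9: for `f` with convergent indefinite integral at `±∞` and
`g ∈ L¹ ∩ BV`, the improper convolution `f∗g` exists on `ℝ` and
`|∫_a^b f∗g| ≤ ‖f‖_A ‖g‖₁` for all `a ≤ b` (so `‖f∗g‖_A ≤ ‖f‖_A ‖g‖₁`). -/
theorem stmt14 (f : ℝ → ℂ) (g : ℝ → ℝ)
    (hf : ∀ a b : ℝ, IntegrableOn f (Set.Icc a b))
    (hF₁ : ∃ c : ℂ, Tendsto (fun x : ℝ => ∫ t in (0:ℝ)..x, f t) atTop (nhds c))
    (hF₂ : ∃ c : ℂ, Tendsto (fun x : ℝ => ∫ t in (0:ℝ)..x, f t) atBot (nhds c))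
    (hg1 : Integrable g)
    (hgbv : BoundedVariationOn g Set.univ) :
    ∃ fg : ℝ → ℂ,
      (∀ x : ℝ, Tendsto (fun T : ℝ × ℝ =>
          ∫ t in (-T.1)..T.2, f (x - t) * ((g t : ℝ) : ℂ))
        (atTop ×ˢ atTop) (nhds (fg x))) ∧
      ∀ a b : ℝ, a ≤ b →
        ‖∫ x in a..b, fg x‖ ≤
          sSup {r : ℝ | ∃ c d : ℝ, c ≤ d ∧ r = ‖∫ t in c..d, f t‖} * ∫ t : ℝ, |g t| := by
  have hfi (a b : ℝ) : IntervalIntegrable f volume a b :=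
    intervalIntegrable_iff.2 ((hf _ _).mono_set Set.Ioc_subset_Icc_self)
  obtain ⟨c₁, hc₁⟩ := hF₁
  obtain ⟨c₂, hc₂⟩ := hF₂
  have hF : Bornology.IsBounded (Set.range fun x ↦ ∫ t in 0..x, f t) :=
    (intervalIntegral.continuous_primitive hfi 0).isBounded_range_iff_isBigO_atTop_atBot.2
      ⟨hc₁.isBigO_one ℝ, hc₂.isBigO_one ℝ⟩
  simpa only [Complex.real_smul, mul_comm, alexiewiczNorm] using stmt14_general f g hfi hF hg1 hgbv
end

section
/- Let f : ℝ → ℂ be locally integrable such that F(x) = ∫_0^x f has finite limits as x → ∞ and as x → −∞, let s ∈ ℝ be such that the Fourier transform f̂(s) exists, and let g : ℝ → ℝ be Lebesgue integrable on ℝ and of bounded variation on ℝ, with ordinary Fourier transform ĝ(s) = ∫_{-∞}^{∞} e^{-isx} g(x) dx. Define f∗g(x) = lim_{T₁,T₂→∞} ∫_{-T₁}^{T₂} f(x−t) g(t) dt (which exists for every x). Then the Fourier transform of f∗g exists at s and (f∗g)^(s) = f̂(s) · ĝ(s). -/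
open MeasureTheory Filter

/-- The Fourier transform of `f` exists at `s` with value `L`:
`∫_{-T₁}^{T₂} e^{-isx} f(x) dx → L` as `T₁ → ∞` and `T₂ → ∞` independently. -/
def HasFourierHK (f : ℝ → ℂ) (s : ℝ) (L : ℂ) : Prop :=
  Tendsto (fun T : ℝ × ℝ =>
      ∫ x in (-T.1)..T.2, Complex.exp (-(Complex.I * (s : ℂ) * (x : ℂ))) * f x)
    (atTop ×ˢ atTop) (nhds L)

/-!
A function `g` in `L¹ ∩ BV` tends to `0` at `±∞`, and is the difference `(V + g) - V` of two
nonnegative nonincreasing functions, where `V x` is the variation of `g` over `[x, ∞)`. The second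
mean value theorem then bounds `∫_a^b g h` by `3 V(a)` times a bound for the integrals of `h`. With
`h t = f (x - t)`, whose integrals are bounded because `f` has a bounded primitive, this is
Dirichlet's test for the existence of `(f∗g)(x)`, and it bounds the truncated convolutions uniformly
in `x`.

The character `e x = exp(-isx)` is multiplicative, so `e · (f∗g)` is the improper convolution of
`H = e f` and `G = e g`. Fubini on rectangles followed by dominated convergence gives
`∫_A^B e · (f∗g) = ∫ G(t) (∫_{A-t}^{B-t} H) dt`, where the inner integrals are bounded and tend to
`f̂(s)`; a last dominated convergence as `A → -∞`, `B → ∞` yields `f̂(s) ∫ G`.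
-/

open Set
open scoped Topology Interval

/-- The improper integral of `f` over `ℝ` exists and equals `L`, the two ends tending to infinity
independently. A truncated integral of a function that is not locally integrable may have the junk
value `0`. `HasFourierHK f s L` is, by unfolding, this notion for `f` times the character. -/
def HasImproperIntegral {E : Type*} [NormedAddCommGroup E] [NormedSpace ℝ E] (f : ℝ → E) (L : E) :
    Prop :=
  Tendsto (fun T : ℝ × ℝ => ∫ x in (-T.1)..T.2, f x) (atTop ×ˢ atTop) (𝓝 L)

section ImproperIntegral

variable {E : Type*} [NormedAddCommGroup E] [NormedSpace ℝ E] {f : ℝ → E} {L : E}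

lemma HasImproperIntegral.of_tendsto {c d : E} (hf : ∀ a b, IntervalIntegrable f volume a b)
    (hc : Tendsto (fun x => ∫ t in (0 : ℝ)..x, f t) atTop (𝓝 c))
    (hd : Tendsto (fun x => ∫ t in (0 : ℝ)..x, f t) atBot (𝓝 d)) :
    HasImproperIntegral f (c - d) := by
  refine ((hc.comp tendsto_snd).sub
    (hd.comp (tendsto_neg_atTop_atBot.comp tendsto_fst))).congr fun T => ?_
  exact intervalIntegral.integral_interval_sub_left (hf _ _) (hf _ _)

lemma HasImproperIntegral.tendsto_symmetric (hf : HasImproperIntegral f L) :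
    Tendsto (fun R => ∫ x in (-R)..R, f x) atTop (𝓝 L) :=
  hf.comp (tendsto_id.prodMk tendsto_id)

lemma HasImproperIntegral.tendsto_sub (hf : HasImproperIntegral f L) (t : ℝ) :
    Tendsto (fun T : ℝ × ℝ => ∫ x in (-T.1 - t)..(T.2 - t), f x) (atTop ×ˢ atTop) (𝓝 L) := by
  have hshift : Tendsto (fun T : ℝ × ℝ => (T.1 + t, T.2 - t)) (atTop ×ˢ atTop) (atTop ×ˢ atTop) :=
    (tendsto_atTop_add_const_right _ t tendsto_fst).prodMk
      (tendsto_atTop_add_const_right _ (-t) tendsto_snd)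
  refine (hf.comp hshift).congr fun T => ?_
  simp only [Function.comp_apply, neg_add']

lemma HasImproperIntegral.exists_norm_integral_le (hf : HasImproperIntegral f L)
    (hfi : ∀ a b, IntervalIntegrable f volume a b) : ∃ C, ∀ a b, ‖∫ x in a..b, f x‖ ≤ C := by
  set F : ℝ → E := fun x => ∫ t in (0 : ℝ)..x, f t
  have hF (a b : ℝ) : ∫ x in a..b, f x = F b - F a :=
    (intervalIntegral.integral_interval_sub_left (hfi _ _) (hfi _ _)).symm
  have hbdd : ∀ᶠ T : ℝ × ℝ in atTop ×ˢ atTop, ‖F T.2 - F (-T.1)‖ ≤ ‖L‖ + 1 := by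
    simp only [← hF]
    exact hf.norm.eventually_le_const (lt_add_one _)
  obtain ⟨a, ha⟩ := hbdd.curry.exists
  obtain ⟨b, hb⟩ := (eventually_swap_iff.1 hbdd).curry.exists
  have hTop : F =O[atTop] (1 : ℝ → ℝ) := by
    refine .of_bound (‖L‖ + 1 + ‖F (-a)‖) (ha.mono fun y hy => ?_)
    have := norm_le_norm_sub_add (F y) (F (-a))
    simp only [Pi.one_apply, norm_one, mul_one]
    linarith
  have hBot : F =O[atBot] (1 : ℝ → ℝ) := by
    refine .of_bound (‖L‖ + 1 + ‖F b‖) ((tendsto_neg_atBot_atTop.eventually hb).mono fun y hy => ?_)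
    have := norm_le_norm_sub_add (F y) (F b)
    rw [norm_sub_rev] at this
    simp only [Prod.fst_swap, Prod.snd_swap, neg_neg, Pi.one_apply, norm_one, mul_one] at hy ⊢
    linarith
  have hcont : Continuous F := intervalIntegral.continuous_primitive hfi 0
  have hrange := hcont.isBounded_range_iff_isBigO_atTop_atBot.2 ⟨hTop, hBot⟩
  obtain ⟨C, hC⟩ := Metric.isBounded_range_iff.1 hrange
  exact ⟨C, fun a b => by rw [hF, ← dist_eq_norm]; exact hC b a⟩

lemma HasImproperIntegral.const_smul {𝕜 : Type*} [RCLike 𝕜] [NormedSpace 𝕜 E]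
    [SMulCommClass ℝ 𝕜 E] (hf : HasImproperIntegral f L) (c : 𝕜) :
    HasImproperIntegral (fun x => c • f x) (c • L) :=
  (Tendsto.const_smul hf c).congr fun _ => (intervalIntegral.integral_smul c f).symm

end ImproperIntegral

section SecondMeanValue

variable {E : Type*} [NormedAddCommGroup E] [NormedSpace ℝ E] {h : ℝ → E} {p : ℝ → ℝ} {a b K : ℝ}

lemma norm_setIntegral_inter_le_of_isLowerSet {S : Set ℝ} (hS : IsLowerSet S) (hab : a ≤ b)
    (hK : ∀ c ∈ Icc a b, ‖∫ t in a..c, h t‖ ≤ K) : ‖∫ t in Ioc a b ∩ S, h t‖ ≤ K := by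
  rcases (Ioc a b ∩ S).eq_empty_or_nonempty with hempty | hne
  · simpa [hempty] using hK a (left_mem_Icc.2 hab)
  set c := sSup (Ioc a b ∩ S)
  have hbdd : BddAbove (Ioc a b ∩ S) := ⟨b, fun x hx => hx.1.2⟩
  obtain ⟨y, hy⟩ := hne
  have hac : a ≤ c := hy.1.1.le.trans (le_csSup hbdd hy)
  have hcb : c ≤ b := csSup_le ⟨y, hy⟩ fun x hx => hx.1.2
  have hIoo : Ioo a c ⊆ Ioc a b ∩ S := fun x hx =>
    have ⟨_, hz, hxz⟩ := exists_lt_of_lt_csSup ⟨y, hy⟩ hx.2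
    ⟨⟨hx.1, hx.2.le.trans hcb⟩, hS hxz.le hz.2⟩
  have hIoc : Ioc a b ∩ S ⊆ Ioc a c := fun x hx => ⟨hx.1.1, le_csSup hbdd hx⟩
  have hae : (Ioc a b ∩ S : Set ℝ) =ᵐ[volume] Ioc a c :=
    hIoc.eventuallyLE.antisymm (Ioo_ae_eq_Ioc.symm.le.trans hIoo.eventuallyLE)
  rw [setIntegral_congr_set hae, ← intervalIntegral.integral_of_le hac]
  exact hK c ⟨hac, hcb⟩

lemma intervalIntegrable_antitone_smul (hp : Antitone p) (hh : IntervalIntegrable h volume a b) :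
    IntervalIntegrable (fun t => p t • h t) volume a b := by
  rw [intervalIntegrable_iff] at hh ⊢
  refine Integrable.bdd_smul hh (max |p (min a b)| |p (max a b)|)
    hp.measurable.aestronglyMeasurable ?_
  filter_upwards [ae_restrict_mem measurableSet_uIoc] with t ht
  exact abs_le_max_abs_abs (hp ht.2) (hp ht.1.le) |>.trans_eq (max_comm _ _)

lemma setIntegral_Ico_indicator_Iio [CompleteSpace E] {r M : ℝ} (hr : 0 ≤ r) (hrM : r ≤ M) (v : E) :
    ∫ u in Ico 0 M, (Iio r).indicator (fun _ => v) u = r • v := by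
  rw [setIntegral_indicator measurableSet_Iio, Ico_inter_Iio, min_eq_right hrM, setIntegral_const,
    Real.volume_real_Ico_of_le hr, sub_zero]

theorem norm_integral_antitone_smul_le [CompleteSpace E] (hab : a ≤ b) (hp : Antitone p)
    (hpb : 0 ≤ p b) (hh : IntervalIntegrable h volume a b)
    (hK : ∀ c ∈ Icc a b, ‖∫ t in a..c, h t‖ ≤ K) :
    ‖∫ t in a..b, p t • h t‖ ≤ p a * K := by
  have hpa : 0 ≤ p a := hpb.trans (hp hab)
  -- Layer cake: `p t` is the length of `{u ∈ [0, p a) | u < p t}`, and each level set `{u < p}` is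
  -- an initial segment of the line.
  set φ : ℝ → ℝ → E := fun t u => {z : ℝ × ℝ | z.2 < p z.1}.indicator (fun z => h z.1) (t, u)
  have hφ : Integrable (Function.uncurry φ)
      ((volume.restrict (Ioc a b)).prod (volume.restrict (Ico 0 (p a)))) :=
    (hh.1.comp_fst _).indicator
      (measurableSet_lt measurable_snd (hp.measurable.comp measurable_fst))
  have hlevel (u : ℝ) : ‖∫ t in Ioc a b, φ t u‖ ≤ K := by
    have hmeas : MeasurableSet {t | u < p t} := measurableSet_lt measurable_const hp.measurable
    have hlower : IsLowerSet {t | u < p t} := fun x y hyx hx => lt_of_lt_of_le hx (hp hyx)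
    exact setIntegral_indicator hmeas (f := h) ▸
      norm_setIntegral_inter_le_of_isLowerSet hlower hab hK
  calc ‖∫ t in a..b, p t • h t‖
      = ‖∫ t in Ioc a b, ∫ u in Ico 0 (p a), φ t u‖ := by
        rw [intervalIntegral.integral_of_le hab]
        congr 1
        refine setIntegral_congr_fun measurableSet_Ioc fun t ht => ?_
        exact (setIntegral_Ico_indicator_Iio (hpb.trans (hp ht.2)) (hp ht.1.le) (h t)).symm
    _ = ‖∫ u in Ico 0 (p a), ∫ t in Ioc a b, φ t u‖ := by rw [integral_integral_swap hφ]
    _ ≤ K * volume.real (Ico 0 (p a)) :=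
        norm_setIntegral_le_of_norm_le_const measure_Ico_lt_top fun u _ => hlevel u
    _ = p a * K := by rw [Real.volume_real_Ico_of_le hpa, sub_zero, mul_comm]

end SecondMeanValue

section BoundedVariation

lemma tendsto_zero_atTop_of_integrable_of_boundedVariationOn {E : Type*} [NormedAddCommGroup E]
    [CompleteSpace E] {g : ℝ → E} (hgi : Integrable g) (hg : BoundedVariationOn g univ) :
    Tendsto g atTop (𝓝 0) := by
  obtain ⟨l, hl⟩ := hg.exists_tendsto_atTop
  rw [principal_univ, top_inf_eq] at hl
  have hvol : ∀ s ∈ (atTop : Filter ℝ), volume s = ⊤ := fun s hs =>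
    have ⟨a, ha⟩ := mem_atTop_sets.1 hs
    measure_mono_top ha Real.volume_Ici
  rwa [IntegrableAtFilter.eq_zero_of_tendsto (hgi.integrableAtFilter _) hvol hl] at hl

lemma boundedVariationOn_univ_comp_neg {E : Type*} [PseudoEMetricSpace E] {g : ℝ → E}
    (hg : BoundedVariationOn g univ) : BoundedVariationOn (fun t => g (-t)) univ :=
  ne_top_of_le_ne_top hg
    (eVariationOn.comp_le_of_antitoneOn g Neg.neg (fun _ _ _ _ => neg_le_neg) (mapsTo_univ _ _))

lemma tendsto_zero_atBot_of_integrable_of_boundedVariationOn {E : Type*} [NormedAddCommGroup E]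
    [CompleteSpace E] {g : ℝ → E} (hgi : Integrable g) (hg : BoundedVariationOn g univ) :
    Tendsto g atBot (𝓝 0) := by
  simpa only [Function.comp_def, neg_neg] using
    (tendsto_zero_atTop_of_integrable_of_boundedVariationOn hgi.comp_neg
      (boundedVariationOn_univ_comp_neg hg)).comp tendsto_neg_atBot_atTop

/-- The variation of `g` over `[x, ∞)`. As a real number it is `0`, a junk value, when that
variation is infinite. -/
noncomputable def tailVariation (g : ℝ → ℝ) (x : ℝ) : ℝ :=
  (eVariationOn g (Ici x)).toReal

variable {g : ℝ → ℝ} (hg : BoundedVariationOn g univ)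
include hg

lemma tailVariation_le (x : ℝ) : tailVariation g x ≤ (eVariationOn g univ).toReal :=
  ENNReal.toReal_mono hg (eVariationOn.mono g (subset_univ _))

lemma antitone_tailVariation : Antitone (tailVariation g) := fun _ _ hxy =>
  ENNReal.toReal_mono (hg.mono (subset_univ _)) (eVariationOn.mono g (Ici_subset_Ici.2 hxy))

lemma antitone_tailVariation_add : Antitone (tailVariation g + g) := by
  intro x y hxy
  have hx : BoundedVariationOn g (Icc x y) := hg.mono (subset_univ _)
  have hy : BoundedVariationOn g (Ici y) := hg.mono (subset_univ _)
  have hsplit : tailVariation g x = (eVariationOn g (Icc x y)).toReal + tailVariation g y := by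
    rw [tailVariation, ← Icc_union_Ici_eq_Ici hxy,
      eVariationOn.union g (isGreatest_Icc hxy) isLeast_Ici, ENNReal.toReal_add hx hy,
      tailVariation]
  have hdiff := hx.sub_le (right_mem_Icc.2 hxy) (left_mem_Icc.2 hxy)
  simp only [Pi.add_apply]
  linarith

lemma tendsto_tailVariation : Tendsto (tailVariation g) atTop (𝓝 0) := by
  have := hg.tendsto_eVariationOn_Ici_zero
  simp only [univ_inter, principal_univ, top_inf_eq] at this
  exact (ENNReal.tendsto_toReal ENNReal.zero_ne_top).comp this

lemma abs_le_tailVariation (hlim : Tendsto g atTop (𝓝 0)) (x : ℝ) : |g x| ≤ tailVariation g x := by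
  have hx : BoundedVariationOn g (Ici x) := hg.mono (subset_univ _)
  refine le_of_tendsto (by simpa using (hlim.const_sub (g x)).abs) ?_
  filter_upwards [Ici_mem_atTop x] with y hy
  exact hx.dist_le self_mem_Ici hy

variable {E : Type*} [NormedAddCommGroup E] [NormedSpace ℝ E] {h : ℝ → E} {a b K : ℝ}

lemma intervalIntegrable_boundedVariationOn_smul (hh : IntervalIntegrable h volume a b) :
    IntervalIntegrable (fun t => g t • h t) volume a b := by
  refine ((intervalIntegrable_antitone_smul (antitone_tailVariation_add hg) hh).sub
    (intervalIntegrable_antitone_smul (antitone_tailVariation hg) hh)).congr ?_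
  exact fun t _ => by simp [add_smul]

variable [CompleteSpace E]

theorem norm_integral_smul_le_tailVariation (hlim : Tendsto g atTop (𝓝 0)) (hab : a ≤ b)
    (hh : IntervalIntegrable h volume a b) (hK : ∀ c ∈ Icc a b, ‖∫ t in a..c, h t‖ ≤ K) :
    ‖∫ t in a..b, g t • h t‖ ≤ 3 * tailVariation g a * K := by
  have habs := abs_le_tailVariation hg hlim
  have hK₀ : 0 ≤ K := (norm_nonneg _).trans (hK a (left_mem_Icc.2 hab))
  have hp := antitone_tailVariation_add hg
  have hq := antitone_tailVariation hg
  calc ‖∫ t in a..b, g t • h t‖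
      = ‖(∫ t in a..b, (tailVariation g + g) t • h t) - ∫ t in a..b, tailVariation g t • h t‖ := by
        rw [← intervalIntegral.integral_sub (intervalIntegrable_antitone_smul hp hh)
          (intervalIntegrable_antitone_smul hq hh)]
        simp only [← sub_smul, Pi.add_apply, add_sub_cancel_left]
    _ ≤ (tailVariation g + g) a * K + tailVariation g a * K := by
        refine norm_sub_le_of_le (norm_integral_antitone_smul_le hab hp ?_ hh hK)
          (norm_integral_antitone_smul_le hab hq ((abs_nonneg _).trans (habs b)) hh hK)
        exact neg_le_iff_add_nonneg'.1 (abs_le.1 (habs b)).1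
    _ = (2 * tailVariation g a + g a) * K := by simp only [Pi.add_apply]; ring
    _ ≤ 3 * tailVariation g a * K := by
        gcongr
        linarith [(abs_le.1 (habs a)).2]

theorem norm_integral_smul_le_eVariationOn_s15 (hlim : Tendsto g atTop (𝓝 0)) (hab : a ≤ b)
    (hh : IntervalIntegrable h volume a b) (hK : ∀ c ∈ Icc a b, ‖∫ t in a..c, h t‖ ≤ K) :
    ‖∫ t in a..b, g t • h t‖ ≤ 3 * (eVariationOn g univ).toReal * K := by
  have hK₀ : 0 ≤ K := (norm_nonneg _).trans (hK a (left_mem_Icc.2 hab))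
  refine (norm_integral_smul_le_tailVariation hg hlim hab hh hK).trans ?_
  gcongr
  exact tailVariation_le hg a

theorem exists_tendsto_integral_smul_atTop (hlim : Tendsto g atTop (𝓝 0))
    (hh : ∀ a b, IntervalIntegrable h volume a b) (hK : ∀ a b, ‖∫ t in a..b, h t‖ ≤ K) :
    ∃ l, Tendsto (fun x => ∫ t in (0 : ℝ)..x, g t • h t) atTop (𝓝 l) := by
  refine cauchySeq_tendsto_of_complete (cauchySeq_of_le_tendsto_0'
    (fun x => 3 * tailVariation g x * K) (fun x y hxy => ?_) ?_)
  · have hgh (a b : ℝ) := intervalIntegrable_boundedVariationOn_smul hg (hh a b)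
    rw [dist_comm, dist_eq_norm, intervalIntegral.integral_interval_sub_left (hgh _ _) (hgh _ _)]
    exact norm_integral_smul_le_tailVariation hg hlim hxy (hh _ _) fun c _ => hK _ _
  · simpa using ((tendsto_tailVariation hg).const_mul 3).mul_const K

theorem exists_tendsto_integral_smul_atBot (hlim : Tendsto g atBot (𝓝 0))
    (hh : ∀ a b, IntervalIntegrable h volume a b) (hK : ∀ a b, ‖∫ t in a..b, h t‖ ≤ K) :
    ∃ l, Tendsto (fun x => ∫ t in (0 : ℝ)..x, g t • h t) atBot (𝓝 l) := by
  obtain ⟨l, hl⟩ := exists_tendsto_integral_smul_atTop (h := fun t => h (-t)) (K := K)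
    (boundedVariationOn_univ_comp_neg hg)
    (hlim.comp tendsto_neg_atTop_atBot)
    (fun a b => by simpa only [neg_neg] using (IntervalIntegrable.iff_comp_neg).1 (hh (-a) (-b)))
    (fun a b => by simpa only [intervalIntegral.integral_comp_neg] using hK (-b) (-a))
  refine ⟨-l, (hl.neg.comp tendsto_neg_atBot_atTop).congr fun x => ?_⟩
  simp only [Function.comp_apply, intervalIntegral.integral_comp_neg (fun t => g t • h t), neg_neg,
    neg_zero, intervalIntegral.integral_symm x]

theorem exists_hasImproperIntegral_smul (hgi : Integrable g)
    (hh : ∀ a b, IntervalIntegrable h volume a b) (hK : ∀ a b, ‖∫ t in a..b, h t‖ ≤ K) :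
    ∃ l, HasImproperIntegral (fun t => g t • h t) l := by
  obtain ⟨c, hc⟩ := exists_tendsto_integral_smul_atTop hg
    (tendsto_zero_atTop_of_integrable_of_boundedVariationOn hgi hg) hh hK
  obtain ⟨d, hd⟩ := exists_tendsto_integral_smul_atBot hg
    (tendsto_zero_atBot_of_integrable_of_boundedVariationOn hgi hg) hh hK
  have hgh (a b : ℝ) := intervalIntegrable_boundedVariationOn_smul hg (hh a b)
  exact ⟨c - d, .of_tendsto hgh hc hd⟩

end BoundedVariation

section Convolution

lemma integrableOn_smul_comp_sub {𝕜 E : Type*} [NontriviallyNormedField 𝕜] [NormedAddCommGroup E]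
    [NormedSpace 𝕜 E] {G : ℝ → 𝕜} {H : ℝ → E} (hG : Integrable G)
    (hH : ∀ a b, IntervalIntegrable H volume a b) (A B c d : ℝ) :
    IntegrableOn (Function.uncurry fun x t => G t • H (x - t)) (Ι A B ×ˢ Ι c d) := by
  set S := Icc (min A B - max c d) (max A B - min c d)
  have hS : Integrable (S.indicator H) := by
    rw [integrable_indicator_iff measurableSet_Icc]
    exact ((intervalIntegrable_iff').1 (hH _ _)).mono_set Icc_subset_uIcc
  refine (hG.convolution_integrand (ContinuousLinearMap.lsmul 𝕜 𝕜) hS).integrableOn.congr_fun ?_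
    (measurableSet_uIoc.prod measurableSet_uIoc)
  rintro ⟨x, t⟩ ⟨hx, ht⟩
  have hxt : x - t ∈ S := ⟨sub_le_sub hx.1.le ht.2, sub_le_sub hx.2 ht.1.le⟩
  simp only [hxt, indicator_of_mem, ContinuousLinearMap.lsmul_apply, Function.uncurry_apply_pair]

variable {E : Type*} [NormedAddCommGroup E] [NormedSpace ℝ E] {H k : ℝ → E} {L : E} {C D : ℝ}

lemma continuous_integral_sub_sub (hH : ∀ a b, IntervalIntegrable H volume a b) (A B : ℝ) :
    Continuous fun t => ∫ x in (A - t)..(B - t), H x := by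
  have hP := intervalIntegral.continuous_primitive hH 0
  have hdiff (t : ℝ) : ∫ x in (A - t)..(B - t), H x =
      (∫ x in (0 : ℝ)..(B - t), H x) - ∫ x in (0 : ℝ)..(A - t), H x :=
    (intervalIntegral.integral_interval_sub_left (hH _ _) (hH _ _)).symm
  simp only [hdiff]
  fun_prop

variable {𝕜 : Type*} [RCLike 𝕜] [NormedSpace 𝕜 E] [SMulCommClass ℝ 𝕜 E] {G : ℝ → 𝕜}

lemma integral_integral_smul_comp_sub (hG : Integrable G)
    (hH : ∀ a b, IntervalIntegrable H volume a b) (A B c d : ℝ) :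
    ∫ x in A..B, ∫ t in c..d, G t • H (x - t) =
      ∫ t in c..d, G t • ∫ x in (A - t)..(B - t), H x := by
  rw [intervalIntegral_intervalIntegral_swap (integrableOn_smul_comp_sub hG hH A B c d)]
  simp only [intervalIntegral.integral_smul, intervalIntegral.integral_comp_sub_right]

lemma integral_improperConvolution (hG : Integrable G)
    (hH : ∀ a b, IntervalIntegrable H volume a b) (hD : ∀ a b, ‖∫ x in a..b, H x‖ ≤ D)
    (hC : ∀ x R, 0 ≤ R → ‖∫ t in (-R)..R, G t • H (x - t)‖ ≤ C)
    (hk : ∀ x, Tendsto (fun R => ∫ t in (-R)..R, G t • H (x - t)) atTop (𝓝 (k x))) (A B : ℝ) :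
    ∫ x in A..B, k x = ∫ t, G t • ∫ x in (A - t)..(B - t), H x := by
  have hleft : Tendsto (fun R => ∫ x in A..B, ∫ t in (-R)..R, G t • H (x - t)) atTop
      (𝓝 (∫ x in A..B, k x)) := by
    refine intervalIntegral.tendsto_integral_filter_of_dominated_convergence (fun _ => C)
      (.of_forall fun R => ?_) ?_ intervalIntegrable_const (.of_forall fun x _ => hk x)
    · simp only [intervalIntegral.intervalIntegral_eq_integral_uIoc]
      refine AEStronglyMeasurable.const_smul ?_ _
      have := integrableOn_smul_comp_sub hG hH A B (-R) R
      rw [IntegrableOn, Measure.volume_eq_prod, ← Measure.prod_restrict] at this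
      exact this.integral_prod_left.aestronglyMeasurable
    · filter_upwards [eventually_ge_atTop 0] with R hR
      exact .of_forall fun x _ => hC x R hR
  have hright : Tendsto (fun R => ∫ t in (-R)..R, G t • ∫ x in (A - t)..(B - t), H x) atTop
      (𝓝 (∫ t, G t • ∫ x in (A - t)..(B - t), H x)) :=
    intervalIntegral_tendsto_integral
      (hG.smul_bdd D (continuous_integral_sub_sub hH A B).aestronglyMeasurable
        (.of_forall fun t => hD _ _)) tendsto_neg_atTop_atBot tendsto_id
  simp only [integral_integral_smul_comp_sub hG hH] at hleft
  exact tendsto_nhds_unique hleft hright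

theorem HasImproperIntegral.convolution [CompleteSpace E] (hL : HasImproperIntegral H L)
    (hG : Integrable G) (hH : ∀ a b, IntervalIntegrable H volume a b)
    (hC : ∀ x R, 0 ≤ R → ‖∫ t in (-R)..R, G t • H (x - t)‖ ≤ C)
    (hk : ∀ x, Tendsto (fun R => ∫ t in (-R)..R, G t • H (x - t)) atTop (𝓝 (k x))) :
    HasImproperIntegral k ((∫ t, G t) • L) := by
  obtain ⟨D, hD⟩ := hL.exists_norm_integral_le hH
  simp only [HasImproperIntegral, integral_improperConvolution hG hH hD hC hk,
    ← integral_smul_const]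
  refine tendsto_integral_filter_of_dominated_convergence (fun t => ‖G t‖ * D)
    (.of_forall fun T => hG.aestronglyMeasurable.smul
      (continuous_integral_sub_sub hH _ _).aestronglyMeasurable)
    (.of_forall fun T => .of_forall fun t => (norm_smul_le _ _).trans
      (mul_le_mul_of_nonneg_left (hD _ _) (norm_nonneg _)))
    (hG.norm.mul_const D) (.of_forall fun t => (hL.tendsto_sub t).const_smul (G t))

end Convolution

section DirichletConvolution

variable {E : Type*} [NormedAddCommGroup E] {f : ℝ → E} {g : ℝ → ℝ} {C : ℝ}

lemma intervalIntegrable_comp_const_sub (hf : ∀ a b, IntervalIntegrable f volume a b)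
    (x a b : ℝ) : IntervalIntegrable (fun t => f (x - t)) volume a b := by
  simpa only [sub_sub_cancel] using (hf (x - a) (x - b)).comp_sub_left x

variable [NormedSpace ℝ E]

lemma norm_integral_comp_const_sub_le (hC : ∀ a b, ‖∫ t in a..b, f t‖ ≤ C) (x a b : ℝ) :
    ‖∫ t in a..b, f (x - t)‖ ≤ C := by
  simpa only [intervalIntegral.integral_comp_sub_left] using hC (x - b) (x - a)

variable [CompleteSpace E] (hf : ∀ a b, IntervalIntegrable f volume a b)
  (hC : ∀ a b, ‖∫ t in a..b, f t‖ ≤ C) (hgi : Integrable g) (hg : BoundedVariationOn g univ)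
include hf hC hgi hg

theorem exists_hasImproperIntegral_smul_comp_const_sub (x : ℝ) :
    ∃ l, HasImproperIntegral (fun t => g t • f (x - t)) l :=
  exists_hasImproperIntegral_smul hg hgi (intervalIntegrable_comp_const_sub hf x)
    (norm_integral_comp_const_sub_le hC x)

theorem norm_integral_smul_comp_const_sub_le (x : ℝ) {a b : ℝ} (hab : a ≤ b) :
    ‖∫ t in a..b, g t • f (x - t)‖ ≤ 3 * (eVariationOn g univ).toReal * C :=
  norm_integral_smul_le_eVariationOn_s15 hg
    (tendsto_zero_atTop_of_integrable_of_boundedVariationOn hgi hg) hab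
    (intervalIntegrable_comp_const_sub hf x a b)
    fun c _ => norm_integral_comp_const_sub_le hC x a c

end DirichletConvolution

lemma norm_exp_neg_I_mul (s x : ℝ) : ‖Complex.exp (-(Complex.I * s * x))‖ = 1 := by
  simpa [mul_assoc] using Complex.norm_exp_I_mul_ofReal (-(s * x))

lemma exp_neg_I_mul_mul_exp_neg_I_mul_sub (s x t : ℝ) :
    Complex.exp (-(Complex.I * s * t)) * Complex.exp (-(Complex.I * s * ↑(x - t))) =
      Complex.exp (-(Complex.I * s * x)) := by
  rw [← Complex.exp_add]
  push_cast
  ring_nf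

theorem stmt15_general (f : ℝ → ℂ) (g : ℝ → ℝ) (hf : ∀ a b, IntervalIntegrable f volume a b)
    (hF : ∃ C, ∀ a b, ‖∫ t in a..b, f t‖ ≤ C) (s : ℝ) (Lf : ℂ) (hfs : HasFourierHK f s Lf)
    (hgi : Integrable g) (hg : BoundedVariationOn g univ) :
    ∃ fg : ℝ → ℂ,
      (∀ x, HasImproperIntegral (fun t => f (x - t) * g t) (fg x)) ∧
      HasFourierHK fg s (Lf * ∫ x : ℝ, Complex.exp (-(Complex.I * s * x)) * g x) := by
  obtain ⟨C, hC⟩ := hF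
  choose fg hfg using exists_hasImproperIntegral_smul_comp_const_sub hf hC hgi hg
  refine ⟨fg, fun x => by simpa only [Complex.real_smul, mul_comm] using hfg x, ?_⟩
  set e : ℝ → ℂ := fun x => Complex.exp (-(Complex.I * s * x))
  have he_norm (x : ℝ) : ‖e x‖ = 1 := norm_exp_neg_I_mul s x
  have he_cont : Continuous e := by fun_prop
  have hmod (x t : ℝ) : (e t * g t) • (e (x - t) * f (x - t)) = e x • (g t • f (x - t)) := by
    simp only [e, ← exp_neg_I_mul_mul_exp_neg_I_mul_sub s x t, smul_eq_mul, Complex.real_smul]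
    ring
  have heg : Integrable (fun t => e t * g t) :=
    hgi.ofReal.bdd_smul 1 he_cont.aestronglyMeasurable (.of_forall fun x => (he_norm x).le)
  have hef (a b : ℝ) : IntervalIntegrable (fun t => e t * f t) volume a b :=
    (hf a b).continuousOn_mul he_cont.continuousOn
  rw [mul_comm Lf]
  refine HasImproperIntegral.convolution (H := fun t => e t * f t)
    (C := 3 * (eVariationOn g univ).toReal * C) hfs heg hef (fun x R hR => ?_) (fun x => ?_)
  · simp only [hmod, intervalIntegral.integral_smul, norm_smul, he_norm, one_mul]
    exact norm_integral_smul_comp_const_sub_le hf hC hgi hg x (neg_le_self hR)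
  · simp only [hmod]
    exact ((hfg x).const_smul (e x)).tendsto_symmetric

/-- Proposition 10: if `f̂(s)` exists and `g ∈ L¹ ∩ BV`, then the improper convolution
`f∗g` exists on `ℝ` and `(f∗g)^(s) = f̂(s) ĝ(s)`. -/
theorem stmt15 (f : ℝ → ℂ) (g : ℝ → ℝ)
    (hf : ∀ a b : ℝ, IntegrableOn f (Set.Icc a b))
    (hF₁ : ∃ c : ℂ, Tendsto (fun x : ℝ => ∫ t in (0:ℝ)..x, f t) atTop (nhds c))
    (hF₂ : ∃ c : ℂ, Tendsto (fun x : ℝ => ∫ t in (0:ℝ)..x, f t) atBot (nhds c))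
    (s : ℝ) (Lf : ℂ) (hfs : HasFourierHK f s Lf)
    (hg1 : Integrable g)
    (hgbv : BoundedVariationOn g Set.univ) :
    ∃ fg : ℝ → ℂ,
      (∀ x : ℝ, Tendsto (fun T : ℝ × ℝ =>
          ∫ t in (-T.1)..T.2, f (x - t) * ((g t : ℝ) : ℂ))
        (atTop ×ˢ atTop) (nhds (fg x))) ∧
      HasFourierHK fg s
        (Lf * ∫ x : ℝ, Complex.exp (-(Complex.I * (s : ℂ) * (x : ℂ))) * ((g x : ℝ) : ℂ)) := by
  obtain ⟨c, hc⟩ := hF₁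
  obtain ⟨d, hd⟩ := hF₂
  have hfi : ∀ a b, IntervalIntegrable f volume a b := fun a b =>
    intervalIntegrable_iff.2 ((hf _ _).mono_set uIoc_subset_uIcc)
  have hF := (HasImproperIntegral.of_tendsto hfi hc hd).exists_norm_integral_le hfi
  exact stmt15_general f g hfi hF s Lf hfs hg1 hgbv
end
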